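/- arXiv:2207.09340 — 2 statements merged into one kernel-verified Lean document; each statement's English description precedes it below -/
import Mathlib

section
/- Let U ∈ ℂ^{n×n} be a unitary matrix and let G : ℝ^k → ℝ^n be a (k,d,n)-generative ReLU network with layer widths k = k_0 ≤ k_1,…,k_d, k_d = n, whose final weight matrix W^{(d)} ∈ ℝ^{n×k_{d−1}} has i.i.d. standard Gaussian entries and whose other weight matrices are arbitrary and fixed. Then there is an absolute constant C > 0 such that for every γ ≥ 0, with probability at least 1 − 2·exp(−γ²) over W^{(d)}, the set range(G) − range(G) is α-coherent with respect to ‖·‖_U where α ≤ C·( √(k/n) + √(log(n)/n) + √( (k/n)·Σ_{i=1}^{d−1} log(2e·k_i/k) ) + γ/√n ). -/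
open MeasureTheory ProbabilityTheory
open scoped ENNReal Matrix

/-- The Euclidean (ℓ²) norm of a finite real vector. -/
noncomputable def l2R {n : ℕ} (x : Fin n → ℝ) : ℝ := Real.sqrt (∑ i, x i ^ 2)

/-- The ℓ^∞ norm of a finite complex vector. -/
noncomputable def linfC {n : ℕ} (x : Fin n → ℂ) : ℝ := ⨆ i, ‖x i‖

/-- The complexification of a real vector. -/
def toC {n : ℕ} (x : Fin n → ℝ) : Fin n → ℂ := fun i => (x i : ℂ)

/-- The measurement norm `‖x‖_U := ‖Ux‖_∞` of a real vector `x`. -/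
noncomputable def mNorm {n : ℕ} (U : Matrix (Fin n) (Fin n) ℂ) (x : Fin n → ℝ) : ℝ :=
  linfC (U.mulVec (toC x))

/-- `T` is `α`-coherent w.r.t. `‖·‖_U`: every `x ∈ T` with `‖x‖₂ = 1` has `‖x‖_U ≤ α`. -/
def Coherent {n : ℕ} (U : Matrix (Fin n) (Fin n) ℂ) (T : Set (Fin n → ℝ)) (α : ℝ) : Prop :=
  ∀ x ∈ T, l2R x = 1 → mNorm U x ≤ α

/-- The hidden layers of a ReLU network: `hid k W j z = σ(W^{(j)} ⋯ σ(W^{(1)} z))`. -/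
noncomputable def hid (k : ℕ → ℕ) (W : ∀ i : ℕ, Matrix (Fin (k (i + 1))) (Fin (k i)) ℝ) :
    (j : ℕ) → (Fin (k 0) → ℝ) → Fin (k j) → ℝ
  | 0, z => z
  | (j + 1), z => fun t => max (Matrix.mulVec (W j) (hid k W j z) t) 0

/-!
By Sauer–Shelah a ReLU layer of width `k_i` composed with a linear map on `ℝ^k` has at most
`(e k_i / k) ^ k` activation patterns, so the hidden part of the network is everywhere equal to one
of at most `N = ∏ (e k_i / k) ^ k` linear maps. Differences of its values therefore lie in `N ^ 2`
subspaces `T` of dimension at most `2k`, and it suffices to bound, for a Gaussian matrix `W` and a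
fixed direction `a`, the probability that `W T` contains a vector strongly correlated with `a`.
Rotating `W` on the left shows that this probability does not depend on `a ≠ 0`, so `a` may be taken
Gaussian and independent of `W`. Given `W`, the subspace `W T` is then fixed, and the projection of
a Gaussian vector to it is controlled by the Laplace transform of the chi-squared distribution. A
union bound over the subspaces and the real and imaginary parts of the rows of `U` concludes.
-/

section SignPatterns

variable {ι 𝕜 E : Type*} [Fintype ι] [Field 𝕜] [LinearOrder 𝕜]
  [AddCommGroup E] [Module 𝕜 E]

open scoped Classical in
/-- The positivity patterns `{i | 0 < A i z}`, `z ∈ E`, of a finite family of linear functionals;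
they index the regions cut out by the hyperplanes `A i = 0`. -/
noncomputable def signPatterns (A : ι → Module.Dual 𝕜 E) : Finset (Finset ι) :=
  {S | ∃ z, ∀ i, i ∈ S ↔ 0 < A i z}

lemma mem_signPatterns {A : ι → Module.Dual 𝕜 E} {S : Finset ι} :
    S ∈ signPatterns A ↔ ∃ z, ∀ i, i ∈ S ↔ 0 < A i z := by
  simp [signPatterns]

variable [IsStrictOrderedRing 𝕜]

/-- A linear dependency among the functionals in `S` cannot have all its terms nonnegative and one
positive, so the pattern of the positive coefficients is not realised. -/
lemma linearIndependent_of_shatters_signPatterns [DecidableEq ι] {A : ι → Module.Dual 𝕜 E}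
    {S : Finset ι} (hS : (signPatterns A).Shatters S) :
    LinearIndependent 𝕜 fun i : S => A i := by
  by_contra hdep
  obtain ⟨c, hc, i₀, hi₀⟩ : ∃ c : S → 𝕜, ∑ i, c i • A i = 0 ∧ ∃ i, 0 < c i := by
    obtain ⟨c, hc, i, hi⟩ := Fintype.not_linearIndependent_iff.1 hdep
    rcases hi.lt_or_gt with hneg | hpos
    · exact ⟨-c, LinearMap.ext fun z => by simpa using LinearMap.congr_fun hc z, i,
        by simpa using hneg⟩
    · exact ⟨c, hc, i, hpos⟩
  obtain ⟨V, hV, hSV⟩ := hS (t := ({i : S | 0 < c i} : Finset S).map (.subtype _))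
    fun _ hx => Finset.property_of_mem_map_subtype _ hx
  obtain ⟨z, hz⟩ := mem_signPatterns.1 hV
  have sign_eq (i : S) : 0 < A i z ↔ 0 < c i := by
    simpa [hz] using Finset.ext_iff.1 hSV i
  have sum_eq_zero : ∑ i, c i * A i z = 0 := by
    simpa using LinearMap.congr_fun hc z
  have nonneg (i : S) : 0 ≤ c i * A i z := by
    by_cases h : 0 < c i
    · exact mul_nonneg h.le ((sign_eq i).2 h).le
    · exact mul_nonneg_of_nonpos_of_nonpos (not_lt.1 h) (not_lt.1 (mt (sign_eq i).1 h))
  exact (Finset.sum_pos' (fun i _ => nonneg i)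
    ⟨i₀, Finset.mem_univ _, mul_pos hi₀ ((sign_eq i₀).2 hi₀)⟩).ne' sum_eq_zero

lemma vcDim_signPatterns_le [DecidableEq ι] [Module.Finite 𝕜 E] (A : ι → Module.Dual 𝕜 E) :
    (signPatterns A).vcDim ≤ Module.finrank 𝕜 E := by
  refine Finset.sup_le fun S hS => ?_
  simpa using (linearIndependent_of_shatters_signPatterns
    (Finset.mem_shatterer.1 hS)).fintype_card_le_finrank

/-- Multiply by `x ^ p` with `x = p / m ≤ 1`, and bound the sum by the expansion of
`(1 + x) ^ m ≤ exp p`. -/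
lemma sum_choose_le_pow {m p : ℕ} (hp : 0 < p) (hpm : p ≤ m) :
    (∑ j ∈ Finset.Iic p, m.choose j : ℝ) ≤ (Real.exp 1 * m / p) ^ p := by
  have hm : 0 < m := hp.trans_le hpm
  set x : ℝ := p / m with hx
  have hx0 : 0 < x := by positivity
  have hx1 : x ≤ 1 := div_le_one_of_le₀ (mod_cast hpm) (by positivity)
  have hpow : (Real.exp 1 * m / p) ^ p = Real.exp 1 ^ p / x ^ p := by
    rw [← div_pow, hx, div_div_eq_mul_div]
  rw [hpow, le_div_iff₀ (by positivity)]
  calc (∑ j ∈ Finset.Iic p, m.choose j : ℝ) * x ^ p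
      ≤ ∑ j ∈ Finset.Iic p, x ^ j * m.choose j := by
        rw [Finset.sum_mul]
        refine Finset.sum_le_sum fun j hj => ?_
        rw [mul_comm]
        gcongr ?_ * _
        exact pow_le_pow_of_le_one hx0.le hx1 (Finset.mem_Iic.1 hj)
    _ ≤ ∑ j ∈ Finset.range (m + 1), x ^ j * m.choose j := by
        refine Finset.sum_le_sum_of_subset_of_nonneg (fun j hj => ?_) fun _ _ _ => by positivity
        exact Finset.mem_range_succ_iff.2 ((Finset.mem_Iic.1 hj).trans hpm)
    _ = (x + 1) ^ m := by simp [add_pow]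
    _ ≤ Real.exp x ^ m := by gcongr; exact Real.add_one_le_exp x
    _ = Real.exp 1 ^ p := by
        rw [← Real.exp_nat_mul, ← Real.exp_nat_mul, hx, mul_div_cancel₀ _ (by positivity), mul_one]

lemma card_signPatterns_le [Module.Finite 𝕜 E] (A : ι → Module.Dual 𝕜 E)
    (hpos : 0 < Module.finrank 𝕜 E) (hle : Module.finrank 𝕜 E ≤ Fintype.card ι) :
    ((signPatterns A).card : ℝ) ≤
      (Real.exp 1 * Fintype.card ι / Module.finrank 𝕜 E) ^ Module.finrank 𝕜 E := by
  classical
  refine le_trans ?_ (sum_choose_le_pow hpos hle)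
  exact_mod_cast calc (signPatterns A).card
      ≤ (signPatterns A).shatterer.card := Finset.card_le_card_shatterer _
    _ ≤ ∑ j ∈ Finset.Iic (signPatterns A).vcDim, (Fintype.card ι).choose j :=
        Finset.card_shatterer_le_sum_vcDim
    _ ≤ ∑ j ∈ Finset.Iic (Module.finrank 𝕜 E), (Fintype.card ι).choose j := by
        gcongr
        exact vcDim_signPatterns_le A

end SignPatterns

section LinearSelection

variable {E F G ι : Type*} [AddCommGroup E] [Module ℝ E] [AddCommGroup F] [Module ℝ F]
  [AddCommGroup G] [Module ℝ G] [Fintype ι] {N N' : ℝ} {f : E → F}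

/-- `f` is a selection of at most `N` linear maps: at every point it coincides with one of them.
This is all that is used of the piecewise linear structure of a network. -/
def IsLinearSelection (N : ℝ) (f : E → F) : Prop :=
  ∃ L : Finset (E →ₗ[ℝ] F), (L.card : ℝ) ≤ N ∧ ∀ z, ∃ l ∈ L, f z = l z

namespace IsLinearSelection

protected lemma id : IsLinearSelection 1 (id : E → E) :=
  ⟨{LinearMap.id}, by simp, fun _ => ⟨LinearMap.id, by simp⟩⟩

lemma mono (hf : IsLinearSelection N f) (hN : N ≤ N') : IsLinearSelection N' f :=
  hf.imp fun _ h => ⟨h.1.trans hN, h.2⟩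

lemma linearMap_comp (hf : IsLinearSelection N f) (A : F →ₗ[ℝ] G) :
    IsLinearSelection N (A ∘ f) := by
  classical
  obtain ⟨L, hcard, hL⟩ := hf
  refine ⟨L.image (A ∘ₗ ·), (Nat.cast_le.2 Finset.card_image_le).trans hcard, fun z => ?_⟩
  obtain ⟨l, hl, hz⟩ := hL z
  exact ⟨A ∘ₗ l, Finset.mem_image_of_mem _ hl, congrArg A hz⟩

lemma relu [Module.Finite ℝ E] {f : E → ι → ℝ} (hf : IsLinearSelection N f)
    (hpos : 0 < Module.finrank ℝ E) (hle : Module.finrank ℝ E ≤ Fintype.card ι) :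
    IsLinearSelection
      (N * (Real.exp 1 * Fintype.card ι / Module.finrank ℝ E) ^ Module.finrank ℝ E)
      fun z i => max (f z i) 0 := by
  classical
  obtain ⟨L, hcard, hL⟩ := hf
  set b := (Real.exp 1 * Fintype.card ι / Module.finrank ℝ E) ^ Module.finrank ℝ E
  let coord (l : E →ₗ[ℝ] ι → ℝ) (i : ι) : Module.Dual ℝ E := LinearMap.proj i ∘ₗ l
  let mask (l : E →ₗ[ℝ] ι → ℝ) (S : Finset ι) : E →ₗ[ℝ] ι → ℝ :=
    LinearMap.pi fun i => if i ∈ S then coord l i else 0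
  refine ⟨L.biUnion fun l => (signPatterns (coord l)).image (mask l), ?_, fun z => ?_⟩
  · calc ((L.biUnion fun l => (signPatterns (coord l)).image (mask l)).card : ℝ)
        ≤ ∑ l ∈ L, (((signPatterns (coord l)).image (mask l)).card : ℝ) :=
          mod_cast Finset.card_biUnion_le
      _ ≤ ∑ _l ∈ L, b := Finset.sum_le_sum fun l _ =>
          (Nat.cast_le.2 Finset.card_image_le).trans (card_signPatterns_le (coord l) hpos hle)
      _ = L.card * b := by rw [Finset.sum_const, nsmul_eq_mul]
      _ ≤ N * b := by gcongr
  · obtain ⟨l, hl, hz⟩ := hL z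
    let S : Finset ι := {i | 0 < coord l i z}
    have hS (i : ι) : i ∈ S ↔ 0 < coord l i z := by simp [S]
    refine ⟨mask l S, Finset.mem_biUnion.2
      ⟨l, hl, Finset.mem_image_of_mem _ (mem_signPatterns.2 ⟨z, hS⟩)⟩, ?_⟩
    funext i
    have hcoord : f z i = coord l i z := congrFun hz i
    rcases lt_or_ge 0 (coord l i z) with h | h
    · simp [mask, (hS i).2 h, hcoord, h.le]
    · simp [mask, mt (hS i).1 h.not_gt, hcoord, h]

/-- The subspaces are the sums of two of the ranges of the selected linear maps. -/
lemma exists_submodules_sub_mem [Module.Finite ℝ E] (hf : IsLinearSelection N f) :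
    ∃ 𝒯 : Finset (Submodule ℝ F), (𝒯.card : ℝ) ≤ N ^ 2 ∧
      (∀ T ∈ 𝒯, Module.finrank ℝ T ≤ 2 * Module.finrank ℝ E) ∧
      ∀ x y, ∃ T ∈ 𝒯, f x - f y ∈ T := by
  classical
  obtain ⟨L, hcard, hL⟩ := hf
  refine ⟨(L ×ˢ L).image fun l => LinearMap.range l.1 ⊔ LinearMap.range l.2, ?_, ?_, fun x y => ?_⟩
  · refine (Nat.cast_le.2 Finset.card_image_le).trans ?_
    rw [Finset.card_product, Nat.cast_mul, ← sq]
    gcongr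
  · simp only [Finset.forall_mem_image, two_mul]
    exact fun l _ => (Submodule.finrank_add_le_finrank_add_finrank _ _).trans
      (add_le_add (LinearMap.finrank_range_le l.1) (LinearMap.finrank_range_le l.2))
  · obtain ⟨l₁, hl₁, hx⟩ := hL x
    obtain ⟨l₂, hl₂, hy⟩ := hL y
    refine ⟨_, Finset.mem_image_of_mem _ (Finset.mk_mem_product hl₁ hl₂), ?_⟩
    rw [hx, hy]
    exact sub_mem (Submodule.mem_sup_left ⟨x, rfl⟩) (Submodule.mem_sup_right ⟨y, rfl⟩)

end IsLinearSelection

lemma isLinearSelection_hid (k : ℕ → ℕ)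
    (W : ∀ i : ℕ, Matrix (Fin (k (i + 1))) (Fin (k i)) ℝ) (hk : 0 < k 0) (j : ℕ)
    (hmono : ∀ i ≤ j, k 0 ≤ k i) :
    IsLinearSelection
      (Real.exp (k 0 * ∑ i ∈ Finset.range j, Real.log (2 * Real.exp 1 * k (i + 1) / k 0)))
      (hid k W j) := by
  induction j with
  | zero => simpa using! IsLinearSelection.id (E := Fin (k 0) → ℝ)
  | succ j ih =>
    have hwidth : k 0 ≤ k (j + 1) := hmono _ le_rfl
    have hrelu := ((ih fun i hi => hmono i (by omega)).linearMap_comp (W j).mulVecLin).relu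
      (by simpa using hk) (by simpa using hwidth)
    refine hrelu.mono ?_
    have hpos : 0 < k (j + 1) := hk.trans_le hwidth
    rw [Finset.sum_range_succ, mul_add, Real.exp_add, Real.exp_nat_mul (Real.log _),
      Real.exp_log (by positivity), Module.finrank_fin_fun, Fintype.card_fin]
    gcongr
    linarith [Real.exp_pos 1]

end LinearSelection

section GaussianProjection

/-- For `1 + 2 * c ≤ 0` the integral diverges and both sides are `0`. -/
lemma integral_exp_neg_mul_sq_gaussianReal (c : ℝ) :
    ∫ x, Real.exp (-(c * x ^ 2)) ∂(gaussianReal 0 1) = (√(1 + 2 * c))⁻¹ := by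
  have density_mul (x : ℝ) : gaussianPDFReal 0 1 x • Real.exp (-(c * x ^ 2)) =
      (√(2 * Real.pi))⁻¹ * Real.exp (-(1 / 2 + c) * x ^ 2) := by
    rw [gaussianPDFReal, smul_eq_mul, mul_assoc, ← Real.exp_add, NNReal.coe_one]
    ring_nf
  simp_rw [integral_gaussianReal_eq_integral_smul one_ne_zero, density_mul]
  rw [integral_const_mul, integral_gaussian, ← Real.sqrt_inv, ← Real.sqrt_inv,
    ← Real.sqrt_mul (by positivity)]
  congr 1
  rw [show 1 + 2 * c = 2 * (1 / 2 + c) by ring]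
  field_simp [Real.pi_ne_zero]

lemma inv_sqrt_le_exp {y : ℝ} (hy : 0 < y) : (√y)⁻¹ ≤ Real.exp ((y⁻¹ - 1) / 2) := by
  rw [← Real.exp_log (inv_pos.2 (Real.sqrt_pos.2 hy)), Real.log_inv, Real.log_sqrt hy.le]
  gcongr
  linarith [Real.one_sub_inv_le_log_of_pos hy]

variable {E : Type*} [NormedAddCommGroup E] [InnerProductSpace ℝ E] [FiniteDimensional ℝ E]
  [MeasurableSpace E] [BorelSpace E]

lemma integral_exp_neg_sum_mul_inner_sq_stdGaussian {ι : Type*} [Fintype ι]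
    (b : OrthonormalBasis ι ℝ E) (c : ι → ℝ) :
    ∫ g, Real.exp (-∑ i, c i * inner ℝ (b i) g ^ 2) ∂(stdGaussian E) =
      ∏ i, (√(1 + 2 * c i))⁻¹ := by
  have coord (x : ι → ℝ) (i : ι) : inner ℝ (b i) (∑ j, x j • b j) = x i :=
    b.orthonormal.inner_right_fintype x i
  rw [stdGaussian_eq_map_pi_orthonormalBasis b,
    integral_map (Measurable.aemeasurable (by fun_prop)) (by fun_prop)]
  simp_rw [coord, ← Finset.sum_neg_distrib, Real.exp_sum]
  rw [integral_fintype_prod_eq_prod (f := fun i x => Real.exp (-(c i * x ^ 2)))]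
  simp_rw [integral_exp_neg_mul_sq_gaussianReal]

lemma integral_exp_neg_norm_sq_starProjection_stdGaussian (V : Submodule ℝ E) (α β : ℝ) :
    ∫ g, Real.exp (-(α * ‖V.starProjection g‖ ^ 2 + β * ‖Vᗮ.starProjection g‖ ^ 2))
        ∂(stdGaussian E) =
      (√(1 + 2 * α))⁻¹ ^ Module.finrank ℝ V * (√(1 + 2 * β))⁻¹ ^ Module.finrank ℝ Vᗮ := by
  let b := ((stdOrthonormalBasis ℝ V).prod (stdOrthonormalBasis ℝ Vᗮ)).map
    V.orthogonalDecomposition.symm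
  have norm_sq (K : Submodule ℝ E) (g : E) :
      ‖K.starProjection g‖ ^ 2 = ∑ i, inner ℝ (stdOrthonormalBasis ℝ K i : E) g ^ 2 := by
    rw [Submodule.starProjection_apply, Submodule.norm_coe,
      ← (stdOrthonormalBasis ℝ K).sum_sq_inner_right]
    simp_rw [Submodule.inner_orthogonalProjectionOnto_eq_of_mem_left]
  have h := integral_exp_neg_sum_mul_inner_sq_stdGaussian b (Sum.elim (fun _ => α) fun _ => β)
  simp_rw [norm_sq, Finset.mul_sum]
  simpa [b, mul_comm (√(1 + 2 * α) ^ _)⁻¹] using h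

/-- Markov's inequality for `exp ((‖P g‖ ^ 2 - s ^ 2 * ‖g‖ ^ 2) / 4)`, `P` the projection to `V`. -/
lemma stdGaussian_lt_norm_starProjection_le_integral (V : Submodule ℝ E) {s : ℝ} (hs : 0 ≤ s) :
    (stdGaussian E).real {g | s * ‖g‖ < ‖V.starProjection g‖} ≤
      (√(1 + 2 * ((s ^ 2 - 1) / 4)))⁻¹ ^ Module.finrank ℝ V *
        (√(1 + 2 * (s ^ 2 / 4)))⁻¹ ^ Module.finrank ℝ Vᗮ := by
  let Z (g : E) : ℝ := Real.exp
    (-((s ^ 2 - 1) / 4 * ‖V.starProjection g‖ ^ 2 + s ^ 2 / 4 * ‖Vᗮ.starProjection g‖ ^ 2))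
  have hZ : ∫ g, Z g ∂(stdGaussian E) = _ :=
    integral_exp_neg_norm_sq_starProjection_stdGaussian V ((s ^ 2 - 1) / 4) (s ^ 2 / 4)
  have hpos : 0 < 1 + 2 * ((s ^ 2 - 1) / 4) := by nlinarith [sq_nonneg s]
  have hZint : Integrable Z (stdGaussian E) :=
    .of_integral_ne_zero (hZ.trans_ne (by positivity))
  have one_le_Z : {g : E | s * ‖g‖ < ‖V.starProjection g‖} ⊆ {g | 1 ≤ Z g} := by
    intro g hg
    have hsq : (s * ‖g‖) ^ 2 < ‖V.starProjection g‖ ^ 2 := by gcongr; exact hg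
    rw [mul_pow, V.norm_sq_eq_add_norm_sq_starProjection g] at hsq
    refine Real.one_le_exp ?_
    linarith
  calc (stdGaussian E).real {g | s * ‖g‖ < ‖V.starProjection g‖}
      ≤ (stdGaussian E).real {g | 1 ≤ Z g} := measureReal_mono one_le_Z
    _ ≤ ∫ g, Z g ∂(stdGaussian E) := by
        simpa only [one_mul] using mul_meas_ge_le_integral_of_nonneg
          (.of_forall fun g => (Real.exp_pos _).le) hZint 1
    _ = _ := hZ

lemma stdGaussian_lt_norm_starProjection_le (V : Submodule ℝ E) {s : ℝ} (hs : 0 ≤ s) :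
    stdGaussian E {g | s * ‖g‖ < ‖V.starProjection g‖} ≤
      ENNReal.ofReal (Real.exp (Module.finrank ℝ V - s ^ 2 * Module.finrank ℝ E / 8)) := by
  rcases le_or_gt 1 s with hs1 | hs1
  · have hempty : {g : E | s * ‖g‖ < ‖V.starProjection g‖} = ∅ :=
      Set.eq_empty_of_forall_notMem fun g hg => hg.not_ge <|
        (V.norm_starProjection_apply_le g).trans (le_mul_of_one_le_left (norm_nonneg g) hs1)
    simp [hempty]
  have hs2 : s ^ 2 ≤ 1 := pow_le_one₀ hs hs1.le
  have hfactor : (√(1 + 2 * ((s ^ 2 - 1) / 4)))⁻¹ ≤ Real.exp (1 / 2) := by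
    refine (inv_sqrt_le_exp (by nlinarith [sq_nonneg s])).trans (Real.exp_le_exp.2 ?_)
    have : (1 + 2 * ((s ^ 2 - 1) / 4))⁻¹ ≤ 2 :=
      inv_le_of_inv_le₀ two_pos (by linarith [sq_nonneg s])
    linarith
  have hfactor_orthogonal : (√(1 + 2 * (s ^ 2 / 4)))⁻¹ ≤ Real.exp (-(s ^ 2 / 8)) := by
    refine (inv_sqrt_le_exp (by positivity)).trans (Real.exp_le_exp.2 ?_)
    have : (1 + 2 * (s ^ 2 / 4))⁻¹ ≤ 1 - s ^ 2 / 4 :=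
      (inv_le_iff_one_le_mul₀' (by positivity)).2 (by nlinarith [sq_nonneg s])
    linarith
  have hfinrank : (Module.finrank ℝ V + Module.finrank ℝ Vᗮ : ℝ) = Module.finrank ℝ E :=
    mod_cast V.finrank_add_finrank_orthogonal
  rw [← ofReal_measureReal]
  refine ENNReal.ofReal_le_ofReal
    ((stdGaussian_lt_norm_starProjection_le_integral V hs).trans ?_)
  calc _ ≤ Real.exp (1 / 2) ^ Module.finrank ℝ V *
          Real.exp (-(s ^ 2 / 8)) ^ Module.finrank ℝ Vᗮ := by gcongr
    _ = Real.exp (Module.finrank ℝ V / 2 - s ^ 2 * Module.finrank ℝ Vᗮ / 8) := by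
        rw [← Real.exp_nat_mul, ← Real.exp_nat_mul, ← Real.exp_add]
        ring_nf
    _ ≤ Real.exp (Module.finrank ℝ V - s ^ 2 * Module.finrank ℝ E / 8) := by
        rw [← hfinrank]
        refine Real.exp_le_exp.2 ?_
        nlinarith [mul_le_of_le_one_left (Nat.cast_nonneg' (α := ℝ) (Module.finrank ℝ V)) hs2]

end GaussianProjection

section Correlation

variable {E ι : Type*} [NormedAddCommGroup E] [InnerProductSpace ℝ E] [Fintype ι] {s : ℝ}

/-- Some vector of the subspace `V` has normalised correlation (cosine of the angle) more than `s`
with `a`, up to sign. The norms are multiplied out, so that zero vectors never correlate. -/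
def IsCorrelated (s : ℝ) (V : Submodule ℝ E) (a : E) : Prop :=
  ∃ v ∈ V, s * ‖a‖ * ‖v‖ < |inner ℝ a v|

lemma not_isCorrelated_zero (s : ℝ) (V : Submodule ℝ E) : ¬ IsCorrelated s V 0 := by
  simp [IsCorrelated]

lemma isCorrelated_smul_iff {V : Submodule ℝ E} {a : E} {c : ℝ} (hc : c ≠ 0) :
    IsCorrelated s V (c • a) ↔ IsCorrelated s V a := by
  refine exists_congr fun v => and_congr_right fun _ => ?_
  rw [norm_smul, real_inner_smul_left, abs_mul, Real.norm_eq_abs, mul_left_comm s, mul_assoc |c|,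
    mul_lt_mul_iff_right₀ (abs_pos.2 hc)]

lemma isCorrelated_map_iff {V : Submodule ℝ E} {a : E} (R : E ≃ₗᵢ[ℝ] E) :
    IsCorrelated s (V.map (R : E →ₗ[ℝ] E)) (R a) ↔ IsCorrelated s V a := by
  simp only [IsCorrelated, Submodule.mem_map]
  constructor
  · rintro ⟨_, ⟨v, hv, rfl⟩, h⟩
    exact ⟨v, hv, by simpa using h⟩
  · rintro ⟨v, hv, h⟩
    exact ⟨R v, ⟨v, hv, rfl⟩, by simpa using h⟩

lemma IsCorrelated.lt_norm_starProjection {V : Submodule ℝ E} [V.HasOrthogonalProjection] {a : E}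
    (h : IsCorrelated s V a) : s * ‖a‖ < ‖V.starProjection a‖ := by
  obtain ⟨v, hv, hlt⟩ := h
  refine lt_of_mul_lt_mul_right (hlt.trans_le ?_) (norm_nonneg v)
  calc |inner ℝ a v| = |inner ℝ (V.starProjection a) v| := by
        rw [V.inner_starProjection_left_eq_right, V.starProjection_eq_self_iff.2 hv]
    _ ≤ ‖V.starProjection a‖ * ‖v‖ := abs_real_inner_le_norm _ _

/-- The image of the coefficient space `T` under the linear map with columns `Y`. -/
def columnImage (T : Submodule ℝ (ι → ℝ)) (Y : PiLp 2 fun _ : ι => E) : Submodule ℝ E :=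
  T.map (Fintype.linearCombination ℝ Y)

lemma isOpen_isCorrelated_columnImage (s : ℝ) (T : Submodule ℝ (ι → ℝ)) :
    IsOpen {q : (PiLp 2 fun _ : ι => E) × E | IsCorrelated s (columnImage T q.1) q.2} := by
  have eq_biUnion : {q : (PiLp 2 fun _ : ι => E) × E | IsCorrelated s (columnImage T q.1) q.2} =
      ⋃ u ∈ T, {q | s * ‖q.2‖ * ‖∑ j, u j • q.1 j‖ < |inner ℝ q.2 (∑ j, u j • q.1 j)|} := by
    ext
    simp [IsCorrelated, columnImage, Fintype.linearCombination_apply]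
  rw [eq_biUnion]
  exact isOpen_biUnion fun u _ => isOpen_lt (by fun_prop) (by fun_prop)

variable [FiniteDimensional ℝ E] [MeasurableSpace E] [BorelSpace E]

lemma measurableSet_isCorrelated_columnImage (s : ℝ) (T : Submodule ℝ (ι → ℝ)) (a : E) :
    MeasurableSet {Y | IsCorrelated s (columnImage T Y) a} :=
  ((isOpen_isCorrelated_columnImage s T).preimage (.prodMk_left a)).measurableSet

lemma stdGaussian_isCorrelated_le (V : Submodule ℝ E) (hs : 0 ≤ s) :
    stdGaussian E {g | IsCorrelated s V g} ≤
      ENNReal.ofReal (Real.exp (Module.finrank ℝ V - s ^ 2 * Module.finrank ℝ E / 8)) :=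
  (measure_mono fun _ => IsCorrelated.lt_norm_starProjection).trans
    (stdGaussian_lt_norm_starProjection_le V hs)

lemma stdGaussian_isCorrelated_columnImage_map (T : Submodule ℝ (ι → ℝ)) (a : E)
    (R : E ≃ₗᵢ[ℝ] E) :
    stdGaussian (PiLp 2 fun _ : ι => E) {Y | IsCorrelated s (columnImage T Y) (R a)} =
      stdGaussian (PiLp 2 fun _ : ι => E) {Y | IsCorrelated s (columnImage T Y) a} := by
  let Q := LinearIsometryEquiv.piLpCongrRight 2 fun _ : ι => R
  have columnImage_rotate (Y : PiLp 2 fun _ : ι => E) :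
      columnImage T (Q Y) = (columnImage T Y).map (R : E →ₗ[ℝ] E) := by
    rw [columnImage, columnImage, ← Submodule.map_comp]
    congr 1
    refine LinearMap.ext fun u => ?_
    simp [Q, Fintype.linearCombination_apply]
  conv_lhs => rw [← stdGaussian_map Q, Measure.map_apply Q.continuous.measurable
    (measurableSet_isCorrelated_columnImage s T (R a))]
  simp only [Set.preimage_ofPred_eq, columnImage_rotate, isCorrelated_map_iff]

/-- After rescaling `a` to the norm of `b`, a reflection takes it to `b`. -/
lemma stdGaussian_isCorrelated_columnImage_eq (T : Submodule ℝ (ι → ℝ)) {a b : E}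
    (ha : a ≠ 0) (hb : b ≠ 0) :
    stdGaussian (PiLp 2 fun _ : ι => E) {Y | IsCorrelated s (columnImage T Y) a} =
      stdGaussian (PiLp 2 fun _ : ι => E) {Y | IsCorrelated s (columnImage T Y) b} := by
  have hc : ‖b‖ / ‖a‖ ≠ 0 := by positivity
  have hnorm : ‖(‖b‖ / ‖a‖) • a‖ = ‖b‖ := by
    rw [norm_smul, norm_div, norm_norm, norm_norm, div_mul_cancel₀ _ (norm_ne_zero_iff.2 ha)]
  rw [← Submodule.reflection_sub hnorm, stdGaussian_isCorrelated_columnImage_map]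
  simp only [isCorrelated_smul_iff hc]

lemma nullSingletonClass_stdGaussian [Nontrivial E] : NullSingletonClass (stdGaussian E) := by
  refine IsGaussian.nullSingletonClass fun x hx => ?_
  obtain ⟨v, hv⟩ := exists_ne (0 : E)
  have hvar := variance_dual_stdGaussian (innerSL ℝ v)
  rw [hx, variance_dirac, innerSL_apply_norm] at hvar
  exact pow_ne_zero 2 (norm_ne_zero_iff.2 hv) hvar.symm

/-- By rotation invariance the fixed direction `a` may be replaced by a Gaussian one, independent of
the columns; conditionally on the columns, the subspace is then the fixed object. -/
lemma stdGaussian_isCorrelated_columnImage_le (T : Submodule ℝ (ι → ℝ)) (hs : 0 ≤ s) (a : E) :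
    stdGaussian (PiLp 2 fun _ : ι => E) {Y | IsCorrelated s (columnImage T Y) a} ≤
      ENNReal.ofReal (Real.exp (Module.finrank ℝ T - s ^ 2 * Module.finrank ℝ E / 8)) := by
  rcases eq_or_ne a 0 with rfl | ha
  · simp [not_isCorrelated_zero]
  have : Nontrivial E := ⟨a, 0, ha⟩
  have := nullSingletonClass_stdGaussian (E := E)
  set P := stdGaussian (PiLp 2 fun _ : ι => E)
  have hmeas := (isOpen_isCorrelated_columnImage (E := E) s T).measurableSet
  calc P {Y | IsCorrelated s (columnImage T Y) a}
      = ∫⁻ _ : E, P {Y | IsCorrelated s (columnImage T Y) a} ∂(stdGaussian E) := by simp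
    _ = ∫⁻ g : E, P {Y | IsCorrelated s (columnImage T Y) g} ∂(stdGaussian E) := by
        refine lintegral_congr_ae ?_
        filter_upwards [Measure.ae_ne (stdGaussian E) 0] with g hg
        exact stdGaussian_isCorrelated_columnImage_eq T ha hg
    _ = (P.prod (stdGaussian E)) {q | IsCorrelated s (columnImage T q.1) q.2} :=
        (Measure.prod_apply_symm hmeas).symm
    _ = ∫⁻ Y, stdGaussian E {g | IsCorrelated s (columnImage T Y) g} ∂P :=
        Measure.prod_apply hmeas
    _ ≤ ∫⁻ _, ENNReal.ofReal
          (Real.exp (Module.finrank ℝ T - s ^ 2 * Module.finrank ℝ E / 8)) ∂P := by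
        refine lintegral_mono fun Y => (stdGaussian_isCorrelated_le _ hs).trans ?_
        gcongr
        exact Submodule.finrank_map_le _ T
    _ = _ := by simp

end Correlation

section Columns

variable {m n : ℕ}

/-- The columns of a matrix given by its entries, with the Hilbert space structure for which i.i.d.
standard Gaussian entries make up a standard Gaussian vector. -/
def columns (w : Fin n × Fin m → ℝ) : PiLp 2 fun _ : Fin m => EuclideanSpace ℝ (Fin n) :=
  WithLp.toLp 2 fun j => WithLp.toLp 2 fun i => w (i, j)

lemma measurable_columns : Measurable (columns (n := n) (m := m)) := by
  unfold columns
  fun_prop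

lemma hasLaw_columns :
    HasLaw (columns (n := n) (m := m)) (stdGaussian (PiLp 2 fun _ => EuclideanSpace ℝ (Fin n)))
      (Measure.pi fun _ => gaussianReal 0 1) where
  aemeasurable := measurable_columns.aemeasurable
  map_eq := by
    let e : Fin n × Fin m ≃ Σ _ : Fin m, Fin n :=
      (Equiv.prodComm _ _).trans (Equiv.sigmaEquivProd _ _).symm
    let Q : EuclideanSpace ℝ (Fin n × Fin m) ≃ₗᵢ[ℝ]
        PiLp 2 fun _ : Fin m => EuclideanSpace ℝ (Fin n) :=
      (LinearIsometryEquiv.piLpCongrLeft 2 ℝ ℝ e).trans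
        (LinearIsometryEquiv.piLpCurry ℝ 2 fun (_ : Fin m) (_ : Fin n) => ℝ)
    have columns_eq : columns (n := n) (m := m) = Q ∘ WithLp.toLp 2 := rfl
    rw [columns_eq, ← Measure.map_map Q.continuous.measurable (by fun_prop),
      map_pi_eq_stdGaussian, stdGaussian_map Q]

lemma toLp_mulVec_mem_columnImage {T : Submodule ℝ (Fin m → ℝ)} {u : Fin m → ℝ} (hu : u ∈ T)
    (M : Matrix (Fin n) (Fin m) ℝ) :
    WithLp.toLp 2 (M *ᵥ u) ∈ columnImage T (columns fun p => M p.1 p.2) := by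
  refine ⟨u, hu, ?_⟩
  ext i
  simp [columns, Fintype.linearCombination_apply, Matrix.mulVec, dotProduct, mul_comm]

end Columns

section Coherence

variable {m n : ℕ} {U : Matrix (Fin n) (Fin n) ℂ} {s : ℝ}

lemma Coherent.mono {T T' : Set (Fin n → ℝ)} {s' : ℝ} (h : Coherent U T s) (hT : T' ⊆ T)
    (hs : s ≤ s') : Coherent U T' s' :=
  fun x hx hnorm => (h x (hT hx) hnorm).trans hs

lemma sum_norm_sq_row_eq_one_of_conjTranspose_mul_self (hU : Uᴴ * U = 1) (i : Fin n) :
    ∑ j, ‖U i j‖ ^ 2 = 1 := by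
  have h : (U * Uᴴ) i i = 1 := by rw [mul_eq_one_comm.1 hU, Matrix.one_apply_eq]
  simp only [Matrix.mul_apply, Matrix.conjTranspose_apply, RCLike.star_def, Complex.mul_conj'] at h
  exact_mod_cast h

/-- The real (`Sum.inl`) and imaginary (`Sum.inr`) parts of the rows of `U`: the real directions
whose correlation with a real vector `x` determines the entries of `U *ᵥ x`. -/
def rowPart (U : Matrix (Fin n) (Fin n) ℂ) : Fin n ⊕ Fin n → EuclideanSpace ℝ (Fin n) :=
  Sum.elim (fun i => WithLp.toLp 2 fun j => (U i j).re) fun i => WithLp.toLp 2 fun j => (U i j).im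

lemma norm_sq_mulVec_toC (U : Matrix (Fin n) (Fin n) ℂ) (x : Fin n → ℝ) (i : Fin n) :
    ‖(U *ᵥ toC x) i‖ ^ 2 = inner ℝ (rowPart U (.inl i)) (WithLp.toLp 2 x) ^ 2 +
      inner ℝ (rowPart U (.inr i)) (WithLp.toLp 2 x) ^ 2 := by
  rw [Complex.sq_norm, Complex.normSq_apply, ← sq, ← sq]
  simp [Matrix.mulVec, dotProduct, toC, rowPart, PiLp.inner_apply, mul_comm]

lemma norm_sq_rowPart_add (U : Matrix (Fin n) (Fin n) ℂ) (i : Fin n) :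
    ‖rowPart U (.inl i)‖ ^ 2 + ‖rowPart U (.inr i)‖ ^ 2 = ∑ j, ‖U i j‖ ^ 2 := by
  simp [rowPart, EuclideanSpace.real_norm_sq_eq, ← Finset.sum_add_distrib, Complex.sq_norm,
    Complex.normSq_apply, ← sq]

lemma mNorm_le_of_not_isCorrelated {V : Submodule ℝ (EuclideanSpace ℝ (Fin n))}
    (hU : ∀ i, ∑ j, ‖U i j‖ ^ 2 ≤ 1) (hs : 0 ≤ s) (hV : ∀ q, ¬ IsCorrelated s V (rowPart U q))
    {x : Fin n → ℝ} (hx : WithLp.toLp 2 x ∈ V) (hnorm : l2R x = 1) : mNorm U x ≤ s := by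
  have hnorm_toLp : ‖WithLp.toLp 2 x‖ = 1 := by
    simpa [EuclideanSpace.norm_eq, l2R] using hnorm
  have inner_sq_le (q : Fin n ⊕ Fin n) :
      inner ℝ (rowPart U q) (WithLp.toLp 2 x) ^ 2 ≤ s ^ 2 * ‖rowPart U q‖ ^ 2 := by
    have h : |inner ℝ (rowPart U q) (WithLp.toLp 2 x)| ≤ s * ‖rowPart U q‖ := by
      by_contra! hlt
      exact hV q ⟨_, hx, by rwa [hnorm_toLp, mul_one]⟩
    rw [← sq_abs, ← mul_pow]
    gcongr
  refine Real.iSup_le (fun i => abs_le_of_sq_le_sq' ?_ hs |>.2) hs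
  calc ‖(U *ᵥ toC x) i‖ ^ 2
      = inner ℝ (rowPart U (.inl i)) (WithLp.toLp 2 x) ^ 2 +
          inner ℝ (rowPart U (.inr i)) (WithLp.toLp 2 x) ^ 2 := norm_sq_mulVec_toC U x i
    _ ≤ s ^ 2 * ‖rowPart U (.inl i)‖ ^ 2 + s ^ 2 * ‖rowPart U (.inr i)‖ ^ 2 :=
        add_le_add (inner_sq_le _) (inner_sq_le _)
    _ = s ^ 2 * ∑ j, ‖U i j‖ ^ 2 := by rw [← mul_add, norm_sq_rowPart_add]
    _ ≤ s ^ 2 := mul_le_of_le_one_right (sq_nonneg s) (hU i)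

lemma coherent_of_forall_not_isCorrelated {𝒯 : Set (Submodule ℝ (Fin m → ℝ))}
    {M : Matrix (Fin n) (Fin m) ℝ} (hU : ∀ i, ∑ j, ‖U i j‖ ^ 2 ≤ 1) (hs : 0 ≤ s)
    (h : ∀ T ∈ 𝒯, ∀ q, ¬ IsCorrelated s (columnImage T (columns fun r => M r.1 r.2))
      (rowPart U q)) :
    Coherent U {x | ∃ T ∈ 𝒯, ∃ u ∈ T, x = M *ᵥ u} s := by
  rintro _ ⟨T, hT, u, hu, rfl⟩ hnorm
  exact mNorm_le_of_not_isCorrelated hU hs (h T hT) (toLp_mulVec_mem_columnImage hu M) hnorm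

/-- Union bound over the subspaces in `𝒯` and the `2 * n` real and imaginary parts of the rows. -/
lemma measure_not_coherent_le {Ω : Type*} [MeasurableSpace Ω] {μ : Measure Ω}
    {M : Ω → Matrix (Fin n) (Fin m) ℝ} {p : ℕ}
    (hM : HasLaw (fun ω => fun q : Fin n × Fin m => M ω q.1 q.2)
      (Measure.pi fun _ => gaussianReal 0 1) μ)
    (hU : ∀ i, ∑ j, ‖U i j‖ ^ 2 ≤ 1) (𝒯 : Finset (Submodule ℝ (Fin m → ℝ)))
    (hp : ∀ T ∈ 𝒯, Module.finrank ℝ T ≤ p) (hs : 0 ≤ s) :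
    μ {ω | ¬ Coherent U {x | ∃ T ∈ 𝒯, ∃ u ∈ T, x = M ω *ᵥ u} s} ≤
      ENNReal.ofReal (𝒯.card * (2 * n) * Real.exp (p - s ^ 2 * n / 8)) := by
  let B (r : Submodule ℝ (Fin m → ℝ) × (Fin n ⊕ Fin n)) :
      Set (PiLp 2 fun _ : Fin m => EuclideanSpace ℝ (Fin n)) :=
    {Y | IsCorrelated s (columnImage r.1 Y) (rowPart U r.2)}
  let Y (ω : Ω) : PiLp 2 fun _ : Fin m => EuclideanSpace ℝ (Fin n) :=
    columns fun q : Fin n × Fin m => M ω q.1 q.2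
  have hY : HasLaw Y (stdGaussian _) μ := hasLaw_columns.comp hM
  have hmeas (r) : MeasurableSet (B r) := measurableSet_isCorrelated_columnImage s r.1 _
  have measure_B_le (r) (hr : r ∈ 𝒯 ×ˢ Finset.univ) :
      μ (Y ⁻¹' B r) ≤ ENNReal.ofReal (Real.exp (p - s ^ 2 * n / 8)) := by
    rw [← Measure.map_apply_of_aemeasurable hY.aemeasurable (hmeas r), hY.map_eq]
    refine (stdGaussian_isCorrelated_columnImage_le r.1 hs _).trans ?_
    rw [finrank_euclideanSpace_fin]
    gcongr
    exact hp r.1 (Finset.mem_product.1 hr).1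
  calc μ {ω | ¬ Coherent U {x | ∃ T ∈ 𝒯, ∃ u ∈ T, x = M ω *ᵥ u} s}
      ≤ μ (⋃ r ∈ 𝒯 ×ˢ Finset.univ, Y ⁻¹' B r) := by
        refine measure_mono fun ω hω => ?_
        by_contra hB
        simp only [Set.mem_iUnion, not_exists] at hB
        exact hω <| coherent_of_forall_not_isCorrelated (𝒯 := 𝒯) hU hs fun T hT q =>
          hB (T, q) (Finset.mk_mem_product hT (Finset.mem_univ q))
    _ ≤ ∑ r ∈ 𝒯 ×ˢ Finset.univ, μ (Y ⁻¹' B r) := measure_biUnion_finset_le _ _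
    _ ≤ ∑ _r ∈ 𝒯 ×ˢ (Finset.univ : Finset (Fin n ⊕ Fin n)),
          ENNReal.ofReal (Real.exp (p - s ^ 2 * n / 8)) := Finset.sum_le_sum measure_B_le
    _ = _ := by
        rw [Finset.sum_const, nsmul_eq_mul, ← ENNReal.ofReal_natCast,
          ← ENNReal.ofReal_mul (by positivity)]
        simp [two_mul]

end Coherence

section GenerativeNetwork

lemma add_le_sq_sum_sqrt {a b c e : ℝ} (ha : 0 ≤ a) (hb : 0 ≤ b) (hc : 0 ≤ c) (he : 0 ≤ e) :
    a + b + c + e ^ 2 ≤ (√a + √b + √c + e) ^ 2 := by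
  have ha' := Real.sqrt_nonneg a
  have hb' := Real.sqrt_nonneg b
  have hc' := Real.sqrt_nonneg c
  nlinarith [Real.sq_sqrt ha, Real.sq_sqrt hb, Real.sq_sqrt hc, mul_nonneg ha' hb',
    mul_nonneg ha' hc', mul_nonneg ha' he, mul_nonneg hb' hc', mul_nonneg hb' he, mul_nonneg hc' he]

lemma ofReal_one_sub_le_measure_of_measure_not_le {Ω : Type*} [MeasurableSpace Ω] {μ : Measure Ω}
    [IsProbabilityMeasure μ] {p : Ω → Prop} {ε : ℝ} (hε : 0 ≤ ε)
    (h : μ {ω | ¬ p ω} ≤ ENNReal.ofReal ε) : ENNReal.ofReal (1 - ε) ≤ μ {ω | p ω} := by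
  rw [ENNReal.ofReal_sub _ hε, ENNReal.ofReal_one, tsub_le_iff_right]
  calc 1 = μ Set.univ := measure_univ.symm
    _ ≤ μ ({ω | p ω} ∪ {ω | ¬ p ω}) := measure_mono fun ω _ => em (p ω)
    _ ≤ μ {ω | p ω} + ENNReal.ofReal ε := (measure_union_le _ _).trans (by gcongr)

lemma sum_log_width_ratio_nonneg {k : ℕ → ℕ} {d : ℕ} (hk : 0 < k 0)
    (hmono : ∀ i ≤ d, k 0 ≤ k i) :
    0 ≤ ∑ i ∈ Finset.range d, Real.log (2 * Real.exp 1 * k (i + 1) / k 0) := by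
  refine Finset.sum_nonneg fun i hi => Real.log_nonneg ?_
  have hwidth : (k 0 : ℝ) ≤ k (i + 1) := mod_cast hmono (i + 1) (Finset.mem_range.1 hi)
  rw [one_le_div (mod_cast hk)]
  nlinarith [Real.one_le_exp zero_le_one]

lemma measure_not_coherent_hid_le {d n : ℕ} {k : ℕ → ℕ}
    (W : ∀ i : ℕ, Matrix (Fin (k (i + 1))) (Fin (k i)) ℝ) {U : Matrix (Fin n) (Fin n) ℂ}
    (hk : 0 < k 0) (hmono : ∀ i ≤ d, k 0 ≤ k i) (hU : ∀ i, ∑ j, ‖U i j‖ ^ 2 ≤ 1)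
    {Ω : Type*} [MeasurableSpace Ω] {μ : Measure Ω} {Wd : Ω → Matrix (Fin n) (Fin (k d)) ℝ}
    (hWd : HasLaw (fun ω => fun p : Fin n × Fin (k d) => Wd ω p.1 p.2)
      (Measure.pi fun _ => gaussianReal 0 1) μ) {s : ℝ} (hs : 0 ≤ s) :
    μ {ω | ¬ Coherent U {u | ∃ x y, u = Wd ω *ᵥ hid k W d x - Wd ω *ᵥ hid k W d y} s} ≤
      ENNReal.ofReal (Real.exp (2 * k 0 * ∑ i ∈ Finset.range d,
        Real.log (2 * Real.exp 1 * k (i + 1) / k 0)) * (2 * n) *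
          Real.exp (2 * k 0 - s ^ 2 * n / 8)) := by
  obtain ⟨𝒯, hcard, hfinrank, h𝒯⟩ :=
    (isLinearSelection_hid k W hk d hmono).exists_submodules_sub_mem
  rw [Module.finrank_fin_fun] at hfinrank
  rw [← Real.exp_nat_mul, ← mul_assoc, Nat.cast_ofNat] at hcard
  calc μ {ω | ¬ Coherent U {u | ∃ x y, u = Wd ω *ᵥ hid k W d x - Wd ω *ᵥ hid k W d y} s}
      ≤ μ {ω | ¬ Coherent U {u | ∃ T ∈ 𝒯, ∃ v ∈ T, u = Wd ω *ᵥ v} s} := by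
        refine measure_mono fun ω => mt fun h => h.mono ?_ le_rfl
        rintro _ ⟨x, y, rfl⟩
        obtain ⟨T, hT, hxy⟩ := h𝒯 x y
        exact ⟨T, hT, _, hxy, (Matrix.mulVec_sub _ _ _).symm⟩
    _ ≤ ENNReal.ofReal (𝒯.card * (2 * n) * Real.exp (2 * k 0 - s ^ 2 * n / 8)) :=
        mod_cast measure_not_coherent_le hWd hU 𝒯 hfinrank hs
    _ ≤ _ := by gcongr

theorem typical_coherence_generative_network_general {d n : ℕ} {k : ℕ → ℕ}
    (W : ∀ i : ℕ, Matrix (Fin (k (i + 1))) (Fin (k i)) ℝ) {U : Matrix (Fin n) (Fin n) ℂ}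
    (hn : 0 < n) (hk : 0 < k 0) (hmono : ∀ i ≤ d, k 0 ≤ k i) (hU : ∀ i, ∑ j, ‖U i j‖ ^ 2 ≤ 1)
    {Ω : Type*} [MeasurableSpace Ω] {μ : Measure Ω} {Wd : Ω → Matrix (Fin n) (Fin (k d)) ℝ}
    (hWd : HasLaw (fun ω => fun p : Fin n × Fin (k d) => Wd ω p.1 p.2)
      (Measure.pi fun _ => gaussianReal 0 1) μ) {γ : ℝ} (hγ : 0 ≤ γ) :
    ENNReal.ofReal (1 - 2 * Real.exp (-γ ^ 2)) ≤
      μ {ω | Coherent U {u | ∃ x y, u = Wd ω *ᵥ hid k W d x - Wd ω *ᵥ hid k W d y}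
        (4 * (√(k 0 / n) + √(Real.log n / n) +
          √(k 0 / n * ∑ i ∈ Finset.range d, Real.log (2 * Real.exp 1 * k (i + 1) / k 0)) +
          γ / √n))} := by
  set S := ∑ i ∈ Finset.range d, Real.log (2 * Real.exp 1 * k (i + 1) / k 0)
  set s := 4 * (√(k 0 / n) + √(Real.log n / n) + √(k 0 / n * S) + γ / √n) with hs
  have hS : 0 ≤ S := sum_log_width_ratio_nonneg hk hmono
  have hlog : 0 ≤ Real.log n := Real.log_natCast_nonneg n
  have hn' : (0 : ℝ) < n := mod_cast hn
  have le_sq : 2 * (k 0 + Real.log n + k 0 * S + γ ^ 2) ≤ s ^ 2 * n / 8 := by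
    calc 2 * (k 0 + Real.log n + k 0 * S + γ ^ 2)
        = 2 * (k 0 / n + Real.log n / n + k 0 / n * S + (γ / √n) ^ 2) * n := by
          rw [div_pow, Real.sq_sqrt hn'.le]
          field_simp
      _ ≤ 2 * (√(k 0 / n) + √(Real.log n / n) + √(k 0 / n * S) + γ / √n) ^ 2 * n := by
          gcongr
          exact add_le_sq_sum_sqrt (by positivity) (by positivity) (by positivity) (by positivity)
      _ = s ^ 2 * n / 8 := by rw [hs]; ring
  have : IsProbabilityMeasure μ := hWd.isProbabilityMeasure_iff.2 inferInstance
  refine ofReal_one_sub_le_measure_of_measure_not_le (by positivity)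
    ((measure_not_coherent_hid_le W hk hmono hU hWd (by positivity)).trans
      (ENNReal.ofReal_le_ofReal ?_))
  calc Real.exp (2 * k 0 * S) * (2 * n) * Real.exp (2 * k 0 - s ^ 2 * n / 8)
      = 2 * Real.exp (2 * k 0 * S + Real.log n + (2 * k 0 - s ^ 2 * n / 8)) := by
        rw [Real.exp_add, Real.exp_add, Real.exp_log hn']
        ring
    _ ≤ 2 * Real.exp (-γ ^ 2) := by
        gcongr
        linarith [sq_nonneg γ]

end GenerativeNetwork

/-- typical coherence of a generative network with Gaussian final
layer: there is an absolute constant `C > 0` such that for a unitary `U` and a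
`(k, d, n)`-generative ReLU network `G` (here of depth `d+1`, input width `k = k 0`,
hidden widths `k 1, …, k d` each at least `k 0`, output width `n = k (d+1)`), whose
final weight matrix `Wd` has i.i.d. `N(0,1)` entries and whose other weights are
arbitrary and fixed: for every `γ ≥ 0`, with probability at least `1 − 2·exp(−γ²)`
over `Wd`, the set `range(G) − range(G)` is `α`-coherent w.r.t. `‖·‖_U` with
`α = C·(√(k/n) + √(log(n)/n) + √((k/n)·Σ_{i=1}^{d} log(2e·k_i/k)) + γ/√n)`. -/
theorem typical_coherence_generative_network :
    ∃ C : ℝ, 0 < C ∧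
      ∀ (d : ℕ) (k : ℕ → ℕ) (W : ∀ i : ℕ, Matrix (Fin (k (i + 1))) (Fin (k i)) ℝ)
        (U : Matrix (Fin (k (d + 1))) (Fin (k (d + 1))) ℂ)
        (hk : 2 ≤ k 0) (hmono : ∀ i, i ≤ d + 1 → k 0 ≤ k i) (hU : Uᴴ * U = 1)
        (Ω : Type) [MeasurableSpace Ω] (μ : Measure Ω), IsProbabilityMeasure μ →
        ∀ (Wd : Ω → Matrix (Fin (k (d + 1))) (Fin (k d)) ℝ),
          Measurable (fun ω => fun p : Fin (k (d + 1)) × Fin (k d) => Wd ω p.1 p.2) →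
          Measure.map (fun ω => fun p : Fin (k (d + 1)) × Fin (k d) => Wd ω p.1 p.2) μ =
            Measure.pi (fun _ : Fin (k (d + 1)) × Fin (k d) => gaussianReal 0 1) →
          ∀ γ : ℝ, 0 ≤ γ →
            ENNReal.ofReal (1 - 2 * Real.exp (-γ ^ 2)) ≤
              μ {ω | Coherent U
                {u | ∃ x y, u = Matrix.mulVec (Wd ω) (hid k W d x) -
                    Matrix.mulVec (Wd ω) (hid k W d y)}
                (C * (Real.sqrt ((k 0 : ℝ) / (k (d + 1))) +
                  Real.sqrt (Real.log (k (d + 1)) / (k (d + 1))) +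
                  Real.sqrt ((k 0 : ℝ) / (k (d + 1)) *
                    ∑ i ∈ Finset.range d,
                      Real.log (2 * Real.exp 1 * (k (i + 1)) / (k 0))) +
                  γ / Real.sqrt (k (d + 1))))} := by
  refine ⟨4, by norm_num, fun d k W U hk hmono hU Ω _ μ _ Wd hWd hlaw γ hγ => ?_⟩
  exact typical_coherence_generative_network_general W
    (by have := hmono (d + 1) le_rfl; omega) (by omega) (fun i hi => hmono i (by omega))
    (fun i => (sum_norm_sq_row_eq_one_of_conjTranspose_mul_self hU i).le)
    ⟨hWd.aemeasurable, hlaw⟩ hγ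
end

section
/- Let 1 ≤ k ≤ n and let A ∈ ℝ^{n×k} be a random matrix with i.i.d. standard Gaussian entries A_{ij} ~ N(0,1). Then there is an absolute constant C > 0 such that for every γ ≥ 0, with probability at least 1 − 2·exp(−γ²), sup{ ‖v‖_∞ : v ∈ range(A), ‖v‖₂ = 1 } ≤ C·( √(k/n) + √(log(n)/n) + γ/√n ). -/
open MeasureTheory ProbabilityTheory

/-- The ℓ^∞ norm of a finite real vector. -/
noncomputable def linfR {n : ℕ} (x : Fin n → ℝ) : ℝ := ⨆ i, |x i|

/-!
Let `W` be the column space of a random matrix whose law is invariant under left multiplication by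
orthogonal matrices, as in the Gaussian case. The law of `‖P_W x‖` depends on `x` only through
`‖x‖`, so for a fixed unit vector `u` the variable `‖P_W u‖` is distributed as `‖P_W g‖ / ‖g‖`,
where `g` is a standard Gaussian vector independent of `W`. Given `W`, the squares `‖P_W g‖²` and
`‖g‖²` are chi-squared with `dim W ≤ k` and `n` degrees of freedom, so exponential moments bound
the probability that the first is much larger than `k` or the second is below `n / 4`. Every unit
vector `v ∈ W` has `|v i| = |⟪P_W (e i), v⟫| ≤ ‖P_W (e i)‖`, and a union bound over the `n` basis
vectors `e i` costs the term `log n`.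
-/

open Module (finrank)
open scoped Kronecker

section GaussianNorm

lemma gaussianPDFReal_mul_exp_mul_sq (t x : ℝ) :
    gaussianPDFReal 0 1 x * Real.exp (t * x ^ 2) =
      (√(2 * Real.pi))⁻¹ * Real.exp (-(1 / 2 - t) * x ^ 2) := by
  rw [gaussianPDFReal, mul_assoc, ← Real.exp_add]
  simp only [NNReal.coe_one, mul_one, sub_zero]
  ring_nf

lemma integrable_exp_mul_sq_gaussianReal {t : ℝ} (ht : t < 1 / 2) :
    Integrable (fun x : ℝ ↦ Real.exp (t * x ^ 2)) (gaussianReal 0 1) := by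
  rw [gaussianReal_of_var_ne_zero _ one_ne_zero,
    integrable_withDensity_iff_integrable_smul' (measurable_gaussianPDF _ _)
      (ae_of_all _ fun _ ↦ gaussianPDF_lt_top)]
  simp_rw [toReal_gaussianPDF, smul_eq_mul, gaussianPDFReal_mul_exp_mul_sq]
  exact (integrable_exp_neg_mul_sq (by linarith)).const_mul _

lemma mgf_sq_gaussianReal (t : ℝ) :
    mgf (fun x ↦ x ^ 2) (gaussianReal 0 1) t = (√(1 - 2 * t))⁻¹ := by
  rw [mgf, integral_gaussianReal_eq_integral_smul one_ne_zero]
  simp_rw [smul_eq_mul, gaussianPDFReal_mul_exp_mul_sq]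
  rw [integral_const_mul, integral_gaussian, ← Real.sqrt_inv, ← Real.sqrt_mul (by positivity),
    ← Real.sqrt_inv]
  congr 1
  rw [show 1 - 2 * t = 2 * (1 / 2 - t) by ring, mul_inv, mul_inv]
  field_simp

variable {ι : Type*} [Fintype ι]

lemma iIndepFun_sq_pi_gaussianReal :
    iIndepFun (fun (i : ι) (x : ι → ℝ) ↦ x i ^ 2) (Measure.pi fun _ ↦ gaussianReal 0 1) :=
  iIndepFun_pi (X := fun _ x ↦ x ^ 2) fun _ ↦ by fun_prop

lemma norm_sq_sum_smul_orthonormalBasis {E : Type*} [NormedAddCommGroup E]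
    [InnerProductSpace ℝ E] (b : OrthonormalBasis ι ℝ E) (x : ι → ℝ) :
    ‖∑ i, x i • b i‖ ^ 2 = ∑ i, x i ^ 2 := by
  simp [← b.equiv_apply_euclideanSpace (WithLp.toLp 2 x), EuclideanSpace.real_norm_sq_eq]

variable {E : Type*} [NormedAddCommGroup E] [InnerProductSpace ℝ E] [FiniteDimensional ℝ E]
  [MeasurableSpace E] [BorelSpace E]

lemma integrable_exp_mul_norm_sq_stdGaussian {t : ℝ} (ht : t < 1 / 2) :
    Integrable (fun x : E ↦ Real.exp (t * ‖x‖ ^ 2)) (stdGaussian E) := by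
  rw [stdGaussian, integrable_map_measure (by fun_prop) (Measurable.aemeasurable (by fun_prop))]
  simp_rw [Function.comp_def, norm_sq_sum_smul_orthonormalBasis]
  simpa only [Finset.sum_apply] using iIndepFun_sq_pi_gaussianReal.integrable_exp_mul_sum
    (fun i ↦ by fun_prop) (s := Finset.univ) fun i _ ↦
      (measurePreserving_eval (fun _ ↦ gaussianReal 0 1) i).integrable_comp_of_integrable
        (integrable_exp_mul_sq_gaussianReal ht)

lemma mgf_norm_sq_stdGaussian (t : ℝ) :
    mgf (fun x : E ↦ ‖x‖ ^ 2) (stdGaussian E) t = (√(1 - 2 * t))⁻¹ ^ finrank ℝ E := by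
  have hcoord (i : Fin (finrank ℝ E)) :
      mgf (fun x : Fin (finrank ℝ E) → ℝ ↦ x i ^ 2) (Measure.pi fun _ ↦ gaussianReal 0 1) t =
        (√(1 - 2 * t))⁻¹ := by
    have heval := measurePreserving_eval (fun _ : Fin (finrank ℝ E) ↦ gaussianReal 0 1) i
    calc _ = mgf (fun y ↦ y ^ 2) ((Measure.pi fun _ ↦ gaussianReal 0 1).map (Function.eval i)) t :=
          (mgf_map heval.aemeasurable (by fun_prop)).symm
      _ = (√(1 - 2 * t))⁻¹ := by rw [heval.map_eq, mgf_sq_gaussianReal]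
  rw [stdGaussian, mgf_map (Measurable.aemeasurable (by fun_prop)) (by fun_prop)]
  simp_rw [Function.comp_def, norm_sq_sum_smul_orthonormalBasis, ← Finset.sum_fn]
  rw [iIndepFun_sq_pi_gaussianReal.mgf_sum fun i ↦ by fun_prop]
  simp [hcoord]

lemma stdGaussian_le_norm_sq_le (s : ℝ) :
    stdGaussian E {x | s ≤ ‖x‖ ^ 2} ≤ ENNReal.ofReal (Real.exp (finrank ℝ E / 2 - s / 4)) := by
  have hsqrt : (√(1 - 2 * (1 / 4 : ℝ)))⁻¹ ≤ Real.exp (1 / 2) := by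
    rw [← Real.sqrt_inv, Real.exp_half]
    exact Real.sqrt_le_sqrt (by linarith [Real.exp_one_gt_d9])
  rw [← ofReal_measureReal]
  refine ENNReal.ofReal_le_ofReal ?_
  calc _ ≤ Real.exp (-(1 / 4) * s) * (√(1 - 2 * (1 / 4)))⁻¹ ^ finrank ℝ E := by
        rw [← mgf_norm_sq_stdGaussian]
        exact measure_ge_le_exp_mul_mgf s (by norm_num)
          (integrable_exp_mul_norm_sq_stdGaussian (by norm_num))
    _ ≤ Real.exp (-(1 / 4) * s) * Real.exp (1 / 2) ^ finrank ℝ E := by gcongr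
    _ = Real.exp (finrank ℝ E / 2 - s / 4) := by
        rw [← Real.exp_nat_mul, ← Real.exp_add]
        ring_nf

lemma stdGaussian_norm_sq_le_le :
    stdGaussian E {x | ‖x‖ ^ 2 ≤ finrank ℝ E / 4} ≤
      ENNReal.ofReal (Real.exp (-(finrank ℝ E / 4))) := by
  have hsqrt : (√(1 - 2 * (-1 : ℝ)))⁻¹ ≤ Real.exp (-1 / 2) := by
    rw [← Real.sqrt_inv, Real.exp_half, Real.exp_neg]
    exact Real.sqrt_le_sqrt (inv_anti₀ (by positivity) (by linarith [Real.exp_one_lt_d9]))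
  rw [← ofReal_measureReal]
  refine ENNReal.ofReal_le_ofReal ?_
  calc _ ≤ Real.exp (-(-1) * (finrank ℝ E / 4)) * (√(1 - 2 * (-1)))⁻¹ ^ finrank ℝ E := by
        rw [← mgf_norm_sq_stdGaussian]
        exact measure_le_le_exp_mul_mgf _ (by norm_num)
          (integrable_exp_mul_norm_sq_stdGaussian (by norm_num))
    _ ≤ Real.exp (-(-1) * (finrank ℝ E / 4)) * Real.exp (-1 / 2) ^ finrank ℝ E := by gcongr
    _ = Real.exp (-(finrank ℝ E / 4)) := by
        rw [← Real.exp_nat_mul, ← Real.exp_add]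
        ring_nf

lemma stdGaussian_map_orthogonalProjectionOnto (W : Submodule ℝ E) :
    (stdGaussian E).map W.orthogonalProjectionOnto = stdGaussian W := by
  apply Measure.ext_of_charFun
  ext w
  rw [charFun_apply, integral_map (by fun_prop) (by fun_prop)]
  simp_rw [real_inner_comm w, Submodule.inner_orthogonalProjectionOnto_eq_of_mem_left,
    real_inner_comm _ (w : E)]
  rw [← charFun_apply, charFun_stdGaussian, charFun_stdGaussian, Submodule.coe_norm]

lemma stdGaussian_le_norm_starProjection_sq_le (W : Submodule ℝ E) (s : ℝ) :
    stdGaussian E {x | s ≤ ‖W.starProjection x‖ ^ 2} ≤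
      ENNReal.ofReal (Real.exp (finrank ℝ W / 2 - s / 4)) := by
  refine le_of_eq_of_le ?_ (stdGaussian_le_norm_sq_le s)
  rw [← stdGaussian_map_orthogonalProjectionOnto, Measure.map_apply (by fun_prop)
    (measurableSet_le (by fun_prop) (by fun_prop))]
  rfl

end GaussianNorm

section Projection

variable {𝕜 E F : Type*} [RCLike 𝕜] [NormedAddCommGroup E] [InnerProductSpace 𝕜 E]

lemma norm_starProjection_apply_le_iff (W : Submodule 𝕜 E) [W.HasOrthogonalProjection] {r : ℝ}
    (hr : 0 ≤ r) {x : E} :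
    ‖W.starProjection x‖ ≤ r ↔ ∀ w ∈ W, ‖inner 𝕜 w x‖ ≤ r * ‖w‖ := by
  refine ⟨fun h w hw ↦ ?_, fun h ↦ ?_⟩
  · rw [← Submodule.starProjection_eq_self_iff.2 hw, W.inner_starProjection_left_eq_right,
      Submodule.starProjection_eq_self_iff.2 hw, mul_comm]
    exact (norm_inner_le_norm _ _).trans (by gcongr)
  · have hsq : ‖W.starProjection x‖ ^ 2 ≤ r * ‖W.starProjection x‖ :=
      calc _ = RCLike.re (inner 𝕜 (W.starProjection x) x) :=
            (W.re_inner_starProjection_eq_normSq x).symm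
        _ ≤ r * ‖W.starProjection x‖ :=
            (RCLike.re_le_norm _).trans (h _ (W.starProjection_apply_mem x))
    nlinarith [norm_nonneg (W.starProjection x)]

variable [FiniteDimensional 𝕜 E] [NormedAddCommGroup F] [NormedSpace 𝕜 F]

lemma lowerSemicontinuous_norm_starProjection_range (x : E) :
    LowerSemicontinuous fun L : F →L[𝕜] E ↦ ‖L.range.starProjection x‖ := by
  refine lowerSemicontinuous_iff_isClosed_preimage.2 fun r ↦ ?_
  rcases lt_or_ge r 0 with hr | hr
  · convert isClosed_empty
    exact Set.eq_empty_of_forall_notMem fun L hL ↦ (hr.trans_le (norm_nonneg _)).not_ge hL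
  · have hpreimage : (fun L : F →L[𝕜] E ↦ ‖L.range.starProjection x‖) ⁻¹' Set.Iic r =
        ⋂ y : F, {L | ‖inner 𝕜 (L y) x‖ ≤ r * ‖L y‖} := by
      ext L
      simp [norm_starProjection_apply_le_iff _ hr]
    rw [hpreimage]
    exact isClosed_iInter fun y ↦ isClosed_le (by fun_prop) (by fun_prop)

end Projection

section TailArithmetic

lemma add_add_sq_le_mul_sq_sqrt_div_add {n k l γ : ℝ} (hn : 0 < n) (hk : 0 ≤ k) (hl : 0 ≤ l)
    (hγ : 0 ≤ γ) : k + l + γ ^ 2 ≤ n * (√(k / n) + √(l / n) + γ / √n) ^ 2 :=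
  calc k + l + γ ^ 2 = n * (√(k / n) ^ 2 + √(l / n) ^ 2 + (γ / √n) ^ 2) := by
        rw [Real.sq_sqrt (by positivity), Real.sq_sqrt (by positivity), div_pow,
          Real.sq_sqrt hn.le]
        field_simp
    _ ≤ n * (√(k / n) + √(l / n) + γ / √n) ^ 2 := by
        gcongr
        rw [add_sq, add_sq]
        linarith [show 0 ≤ √(k / n) * √(l / n) by positivity,
          show 0 ≤ (√(k / n) + √(l / n)) * (γ / √n) by positivity]

lemma mul_exp_le_exp_of_log_add_le {m a b : ℝ} (hm : 0 < m) (h : Real.log m + a ≤ b) :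
    m * Real.exp a ≤ Real.exp b := by
  calc m * Real.exp a = Real.exp (Real.log m + a) := by rw [Real.exp_add, Real.exp_log hm]
    _ ≤ Real.exp b := Real.exp_le_exp.2 h

lemma mul_exp_add_exp_le {m n k s γ : ℝ} (hm : 0 < m) (hk : 0 ≤ k) (hn : 0 ≤ n) (hsn : s ≤ n)
    (hs : 16 * (k + Real.log m + γ ^ 2) ≤ s) :
    m * (Real.exp (-(n / 4)) + Real.exp (k / 2 - s / 16)) ≤ 2 * Real.exp (-γ ^ 2) := by
  rw [mul_add, two_mul]
  exact add_le_add (mul_exp_le_exp_of_log_add_le hm (by linarith))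
    (mul_exp_le_exp_of_log_add_le hm (by linarith))

end TailArithmetic

section Isotropic

variable {Ω E : Type*} [MeasurableSpace Ω] {μ : Measure Ω} [NormedAddCommGroup E]
  [InnerProductSpace ℝ E] [FiniteDimensional ℝ E] {W : Ω → Submodule ℝ E}

/-- A random subspace `W` is isotropic if the law of `‖P_W x‖`, where `P_W` is the orthogonal
projection onto `W`, depends on `x` only through `‖x‖`. Measurability of `W` is encoded by that of
the functions `‖P_W x‖`. -/
structure IsIsotropic (W : Ω → Submodule ℝ E) (μ : Measure Ω) : Prop where
  measurable_norm (x : E) : Measurable fun ω ↦ ‖(W ω).starProjection x‖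
  identDistrib_norm {x y : E} (h : ‖x‖ = ‖y‖) :
    IdentDistrib (fun ω ↦ ‖(W ω).starProjection x‖) (fun ω ↦ ‖(W ω).starProjection y‖) μ μ

namespace IsIsotropic

lemma measurable_uncurry_norm [MeasurableSpace E] [BorelSpace E] (hW : IsIsotropic W μ) :
    Measurable (Function.uncurry fun (x : E) ω ↦ ‖(W ω).starProjection x‖) :=
  measurable_uncurry_of_continuous_of_measurable (fun _ ↦ by fun_prop) hW.measurable_norm

lemma measure_lt_norm_eq (hW : IsIsotropic W μ) {u x : E} (hu : ‖u‖ = 1) (hx : x ≠ 0) (r : ℝ) :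
    μ {ω | r < ‖(W ω).starProjection u‖} = μ {ω | r * ‖x‖ < ‖(W ω).starProjection x‖} := by
  have hx' : 0 < ‖x‖ := norm_pos_iff.2 hx
  refine ((hW.identDistrib_norm (x := u) (y := ‖x‖⁻¹ • x)
    (by simp [norm_smul, hu, hx])).measure_mem_eq measurableSet_Ioi).trans ?_
  congr 1
  ext ω
  simp [norm_smul, lt_inv_mul_iff₀ hx', mul_comm]

lemma measure_lt_norm_le_measure_or (hW : IsIsotropic W μ) {u : E} (hu : ‖u‖ = 1) {r m : ℝ}
    (hr : 0 ≤ r) (hm : 0 ≤ m) (x : E) :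
    μ {ω | r < ‖(W ω).starProjection u‖} ≤
      μ {ω | ‖x‖ ^ 2 ≤ m ∨ r ^ 2 * m ≤ ‖(W ω).starProjection x‖ ^ 2} := by
  rcases le_or_gt (‖x‖ ^ 2) m with hx | hx
  · exact measure_mono fun ω _ ↦ Or.inl hx
  · rw [hW.measure_lt_norm_eq hu (x := x) (by rintro rfl; simp [hm.not_gt] at hx)]
    refine measure_mono fun ω hω ↦ Or.inr ?_
    calc r ^ 2 * m ≤ (r * ‖x‖) ^ 2 := by rw [mul_pow]; gcongr
      _ ≤ ‖(W ω).starProjection x‖ ^ 2 := by gcongr; exact hω.le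

lemma measure_lt_norm_le [IsProbabilityMeasure μ] (hW : IsIsotropic W μ) {k : ℕ}
    (hk : ∀ ω, finrank ℝ (W ω) ≤ k) {u : E} (hu : ‖u‖ = 1) {r : ℝ} (hr : 0 ≤ r) :
    μ {ω | r < ‖(W ω).starProjection u‖} ≤
      ENNReal.ofReal (Real.exp (-(finrank ℝ E / 4))) +
        ENNReal.ofReal (Real.exp (k / 2 - r ^ 2 * finrank ℝ E / 16)) := by
  borelize E
  set n : ℝ := (finrank ℝ E : ℝ)
  let T : Set (E × Ω) := {p | ‖p.1‖ ^ 2 ≤ n / 4} ∪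
    {p | r ^ 2 * (n / 4) ≤ (Function.uncurry fun x ω ↦ ‖(W ω).starProjection x‖) p ^ 2}
  have hT : MeasurableSet T := (measurableSet_le (by fun_prop) (by fun_prop)).union
    (measurableSet_le (by fun_prop) (hW.measurable_uncurry_norm.pow_const 2))
  have hfibre (ω : Ω) : stdGaussian E {x | (x, ω) ∈ T} ≤ ENNReal.ofReal (Real.exp (-(n / 4))) +
      ENNReal.ofReal (Real.exp (k / 2 - r ^ 2 * n / 16)) :=
    calc stdGaussian E {x | (x, ω) ∈ T}
      _ ≤ stdGaussian E {x | ‖x‖ ^ 2 ≤ n / 4} +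
          stdGaussian E {x | r ^ 2 * (n / 4) ≤ ‖(W ω).starProjection x‖ ^ 2} :=
          measure_union_le _ _
      _ ≤ ENNReal.ofReal (Real.exp (-(n / 4))) +
          ENNReal.ofReal (Real.exp (finrank ℝ (W ω) / 2 - r ^ 2 * (n / 4) / 4)) :=
          add_le_add stdGaussian_norm_sq_le_le (stdGaussian_le_norm_starProjection_sq_le _ _)
      _ ≤ _ := by
          rw [show r ^ 2 * (n / 4) / 4 = r ^ 2 * n / 16 by ring]
          gcongr
          exact hk ω
  calc μ {ω | r < ‖(W ω).starProjection u‖}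
    _ = ∫⁻ _, μ {ω | r < ‖(W ω).starProjection u‖} ∂stdGaussian E := by simp
    _ ≤ ∫⁻ x, μ {ω | (x, ω) ∈ T} ∂stdGaussian E :=
        lintegral_mono fun x ↦ hW.measure_lt_norm_le_measure_or hu hr (by positivity) x
    _ = ∫⁻ ω, stdGaussian E {x | (x, ω) ∈ T} ∂μ :=
        (Measure.prod_apply hT).symm.trans (Measure.prod_apply_symm hT)
    _ ≤ ∫⁻ _, (ENNReal.ofReal (Real.exp (-(n / 4))) +
          ENNReal.ofReal (Real.exp (k / 2 - r ^ 2 * n / 16))) ∂μ := lintegral_mono hfibre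
    _ = _ := by simp

lemma measure_exists_lt_norm_le [IsProbabilityMeasure μ] (hW : IsIsotropic W μ)
    {k : ℕ} (hk : ∀ ω, finrank ℝ (W ω) ≤ k) {ι : Type*} [Fintype ι] [Nonempty ι] {u : ι → E}
    (hu : ∀ i, ‖u i‖ = 1) {γ : ℝ} (hγ : 0 ≤ γ) :
    μ {ω | ∃ i, 4 * (√(k / finrank ℝ E) + √(Real.log (Fintype.card ι) / finrank ℝ E) +
        γ / √(finrank ℝ E)) < ‖(W ω).starProjection (u i)‖} ≤
      ENNReal.ofReal (2 * Real.exp (-γ ^ 2)) := by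
  set n : ℝ := (finrank ℝ E : ℝ)
  set m := Fintype.card ι
  set r : ℝ := 4 * (√(k / n) + √(Real.log m / n) + γ / √n) with hr
  rcases lt_or_ge 1 r with hr1 | hr1
  · have hempty : {ω | ∃ i, r < ‖(W ω).starProjection (u i)‖} = ∅ :=
      Set.eq_empty_of_forall_notMem fun ω ⟨i, hi⟩ ↦ (hr1.trans hi).not_ge <|
        ((W ω).norm_starProjection_apply_le (u i)).trans_eq (hu i)
    simp [hempty]
  · have : Nontrivial E :=
      ⟨u (Classical.arbitrary ι), 0, norm_ne_zero_iff.1 (by simp [hu])⟩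
    have hr0 : 0 ≤ r := by positivity
    have hm : (0 : ℝ) < m := Nat.cast_pos.2 Fintype.card_pos
    have hlarge : 16 * (k + Real.log m + γ ^ 2) ≤ r ^ 2 * n := by
      have hsum := add_add_sq_le_mul_sq_sqrt_div_add (n := n)
        (Nat.cast_pos.2 Module.finrank_pos) k.cast_nonneg (Real.log_natCast_nonneg m) hγ
      rw [hr, mul_pow]
      linarith
    calc μ {ω | ∃ i, r < ‖(W ω).starProjection (u i)‖}
      _ ≤ ∑ i, μ {ω | r < ‖(W ω).starProjection (u i)‖} := by
          rw [Set.ofPred_exists]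
          exact measure_iUnion_fintype_le _ _
      _ ≤ ∑ _ : ι, ENNReal.ofReal (Real.exp (-(n / 4)) + Real.exp (k / 2 - r ^ 2 * n / 16)) := by
          gcongr with i
          rw [ENNReal.ofReal_add (by positivity) (by positivity)]
          exact hW.measure_lt_norm_le hk (hu i) hr0
      _ = ENNReal.ofReal (m * (Real.exp (-(n / 4)) + Real.exp (k / 2 - r ^ 2 * n / 16))) := by
          rw [ENNReal.ofReal_mul (by positivity)]
          simp [m]
      _ ≤ ENNReal.ofReal (2 * Real.exp (-γ ^ 2)) := by
          have hrn : r ^ 2 * n ≤ n := mul_le_of_le_one_left (by positivity) (pow_le_one₀ hr0 hr1)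
          exact ENNReal.ofReal_le_ofReal
            (mul_exp_add_exp_le hm (by positivity) (by positivity) hrn hlarge)

end IsIsotropic

end Isotropic

section OrthogonalGroup

variable {ι : Type*} [Fintype ι] [DecidableEq ι] {U : Matrix ι ι ℝ}

lemma mem_orthogonalGroup_iff_exists_linearIsometryEquiv :
    U ∈ Matrix.orthogonalGroup ι ℝ ↔ ∃ f : EuclideanSpace ℝ ι ≃ₗᵢ[ℝ] EuclideanSpace ℝ ι,
      f.toLinearMap = Matrix.toEuclideanLin U := by
  let Φ := Matrix.toEuclideanCLM (n := ι) (𝕜 := ℝ)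
  refine ⟨fun hU ↦ ⟨Unitary.linearIsometryEquiv ⟨Φ U, Unitary.map_mem _ hU⟩, rfl⟩, ?_⟩
  rintro ⟨f, hf⟩
  have hΦ : Φ U = Unitary.linearIsometryEquiv.symm f := ContinuousLinearMap.coe_injective hf.symm
  have hmem : Φ U ∈ unitary _ := hΦ ▸ (Unitary.linearIsometryEquiv.symm f).2
  rw [Unitary.mem_iff, ← map_star, ← map_mul, ← map_mul, ← map_one Φ] at hmem
  exact Unitary.mem_iff.2 (hmem.imp (fun h ↦ Φ.injective h) fun h ↦ Φ.injective h)

lemma exists_mem_orthogonalGroup_toEuclideanLin_eq {x y : EuclideanSpace ℝ ι} (h : ‖x‖ = ‖y‖) :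
    ∃ U ∈ Matrix.orthogonalGroup ι ℝ, Matrix.toEuclideanLin U x = y := by
  let f := (ℝ ∙ (x - y))ᗮ.reflection
  have hf : Matrix.toEuclideanLin (Matrix.toEuclideanLin.symm f.toLinearMap) = f.toLinearMap :=
    Matrix.toEuclideanLin.apply_symm_apply _
  refine ⟨_, mem_orthogonalGroup_iff_exists_linearIsometryEquiv.2 ⟨f, hf.symm⟩, ?_⟩
  rw [hf]
  exact Submodule.reflection_sub h

lemma measurePreserving_mulVec_pi_gaussianReal (hU : U ∈ Matrix.orthogonalGroup ι ℝ) :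
    MeasurePreserving U.mulVec (Measure.pi fun _ ↦ gaussianReal 0 1)
      (Measure.pi fun _ ↦ gaussianReal 0 1) := by
  obtain ⟨f, hf⟩ := mem_orthogonalGroup_iff_exists_linearIsometryEquiv.1 hU
  have htoLp : MeasurePreserving (MeasurableEquiv.toLp 2 (ι → ℝ))
      (Measure.pi fun _ ↦ gaussianReal 0 1) (stdGaussian (EuclideanSpace ℝ ι)) :=
    ⟨MeasurableEquiv.measurable _, map_pi_eq_stdGaussian⟩
  have hf_preserving : MeasurePreserving f (stdGaussian _) (stdGaussian _) :=
    ⟨by fun_prop, stdGaussian_map f⟩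
  convert htoLp.symm.comp (hf_preserving.comp htoLp) using 1
  ext1 x
  exact (congrArg (fun L ↦ WithLp.ofLp (L (WithLp.toLp 2 x))) hf).symm

end OrthogonalGroup

section RandomMatrix

lemma of_curry_entries {ι κ α : Type*} (A : Matrix ι κ α) :
    Matrix.of (Function.curry fun p : ι × κ ↦ A p.1 p.2) = A :=
  rfl

variable {ι κ : Type*} [Fintype κ]

section ColumnSpace

variable [DecidableEq κ]

/-- The column space of a matrix, as a subspace of Euclidean space. -/
noncomputable def columnSpace (A : Matrix ι κ ℝ) : Submodule ℝ (EuclideanSpace ℝ ι) :=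
  (Matrix.toEuclideanLin A).range

lemma finrank_columnSpace_le (A : Matrix ι κ ℝ) :
    finrank ℝ (columnSpace A) ≤ Fintype.card κ :=
  (LinearMap.finrank_range_le _).trans_eq finrank_euclideanSpace

variable [Fintype ι]

lemma norm_starProjection_columnSpace_mul [DecidableEq ι] {U : Matrix ι ι ℝ}
    (hU : U ∈ Matrix.orthogonalGroup ι ℝ) (A : Matrix ι κ ℝ) (x : EuclideanSpace ℝ ι) :
    ‖(columnSpace (U * A)).starProjection (Matrix.toEuclideanLin U x)‖ =
      ‖(columnSpace A).starProjection x‖ := by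
  obtain ⟨f, hf⟩ := mem_orthogonalGroup_iff_exists_linearIsometryEquiv.1 hU
  have hmap : columnSpace (U * A) = (columnSpace A).map f.toLinearMap := by
    rw [hf, columnSpace, columnSpace, ← LinearMap.range_comp]
    exact congrArg LinearMap.range (Matrix.toLpLin_mul_same 2 U A)
  rw [hmap, ← hf]
  exact (congrArg norm (f.toLinearIsometry.map_starProjection (columnSpace A) x)).symm.trans
    (f.norm_map _)

lemma measurable_norm_starProjection_columnSpace (x : EuclideanSpace ℝ ι) :
    Measurable fun a : ι × κ → ℝ ↦
      ‖(columnSpace (Matrix.of (Function.curry a))).starProjection x‖ := by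
  let L : (ι × κ → ℝ) →ₗ[ℝ] EuclideanSpace ℝ κ →L[ℝ] EuclideanSpace ℝ ι :=
    LinearMap.toContinuousLinearMap.toLinearMap ∘ₗ Matrix.toEuclideanLin.toLinearMap ∘ₗ
      (LinearEquiv.curry ℝ ℝ ι κ).toLinearMap
  exact ((lowerSemicontinuous_norm_starProjection_range x).comp
    L.continuous_of_finiteDimensional).measurable

end ColumnSpace

variable [Fintype ι]

/-- The law of a random `ι × κ` matrix is left orthogonally invariant if it is preserved by
`A ↦ U * A` for every orthogonal matrix `U`. Matrices carry no σ-algebra, so the law is encoded as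
a measure on functions on `ι × κ`. -/
def IsLeftOrthogonallyInvariant [DecidableEq ι] (P : Measure (ι × κ → ℝ)) : Prop :=
  ∀ U ∈ Matrix.orthogonalGroup ι ℝ,
    P.map (fun a p ↦ (U * Matrix.of (Function.curry a)) p.1 p.2) = P

lemma isLeftOrthogonallyInvariant_pi_gaussianReal [DecidableEq ι] :
    IsLeftOrthogonallyInvariant (Measure.pi fun _ : ι × κ ↦ gaussianReal 0 1) := by
  classical
  intro U hU
  have hkronecker : (U ⊗ₖ (1 : Matrix κ κ ℝ)).mulVec =
      fun a p ↦ (U * Matrix.of (Function.curry a)) p.1 p.2 := by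
    ext a p
    simp [Matrix.mulVec, dotProduct, Fintype.sum_prod_type, Matrix.mul_apply, Matrix.one_apply]
  rw [← hkronecker]
  exact (measurePreserving_mulVec_pi_gaussianReal
    (Matrix.kronecker_mem_unitary hU (one_mem _))).map_eq

variable {Ω : Type*} [MeasurableSpace Ω] {μ : Measure Ω} {A : Ω → Matrix ι κ ℝ}

lemma isIsotropic_columnSpace [DecidableEq ι] [DecidableEq κ]
    (hA : Measurable fun ω (p : ι × κ) ↦ A ω p.1 p.2)
    (hinv : IsLeftOrthogonallyInvariant (μ.map fun ω p ↦ A ω p.1 p.2)) :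
    IsIsotropic (fun ω ↦ columnSpace (A ω)) μ where
  measurable_norm x := by
    simpa only [Function.comp_def, of_curry_entries] using
      (measurable_norm_starProjection_columnSpace x).comp hA
  identDistrib_norm {x y} h := by
    obtain ⟨U, hU, rfl⟩ := exists_mem_orthogonalGroup_toEuclideanLin_eq h
    have hmul : Measurable fun (a : ι × κ → ℝ) (p : ι × κ) ↦
        (U * Matrix.of (Function.curry a)) p.1 p.2 := by
      simp only [Matrix.mul_apply, Matrix.of_apply, Function.curry_apply]
      fun_prop
    have hident : IdentDistrib (fun ω (p : ι × κ) ↦ (U * A ω) p.1 p.2)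
        (fun ω p ↦ A ω p.1 p.2) μ μ :=
      ⟨(hmul.comp hA).aemeasurable, hA.aemeasurable,
        (Measure.map_map hmul hA).symm.trans (hinv U hU)⟩
    have hnorm : (fun ω ↦ ‖(columnSpace (A ω)).starProjection x‖) =
        fun ω ↦ ‖(columnSpace (U * A ω)).starProjection (Matrix.toEuclideanLin U x)‖ :=
      funext fun ω ↦ (norm_starProjection_columnSpace_mul hU (A ω) x).symm
    rw [hnorm]
    simpa only [Function.comp_def, of_curry_entries] using
      hident.comp (measurable_norm_starProjection_columnSpace (Matrix.toEuclideanLin U x))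

end RandomMatrix

section Coherence

lemma norm_toLp_eq_l2R {n : ℕ} (v : Fin n → ℝ) : ‖WithLp.toLp 2 v‖ = l2R v := by
  simp [EuclideanSpace.norm_eq, l2R]

lemma abs_apply_le_norm_starProjection_mul_norm {ι : Type*} [Fintype ι] [DecidableEq ι]
    {W : Submodule ℝ (EuclideanSpace ℝ ι)} {v : EuclideanSpace ℝ ι} (hv : v ∈ W) (i : ι) :
    |v i| ≤ ‖W.starProjection (EuclideanSpace.single i 1)‖ * ‖v‖ := by
  simpa [EuclideanSpace.inner_single_right] using
    (norm_starProjection_apply_le_iff W (x := EuclideanSpace.single i (1 : ℝ)) (norm_nonneg _)).1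
      le_rfl v hv

lemma linfR_mulVec_le {n k : ℕ} {A : Matrix (Fin n) (Fin k) ℝ} {t : ℝ} (ht : 0 ≤ t)
    (h : ∀ i, ‖(columnSpace A).starProjection (EuclideanSpace.single i 1)‖ ≤ t)
    {y : Fin k → ℝ} (hy : l2R (A.mulVec y) = 1) : linfR (A.mulVec y) ≤ t := by
  refine Real.iSup_le (fun i ↦ ?_) ht
  have hmem : WithLp.toLp 2 (A.mulVec y) ∈ columnSpace A := ⟨WithLp.toLp 2 y, rfl⟩
  have hcoord := abs_apply_le_norm_starProjection_mul_norm hmem i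
  rw [norm_toLp_eq_l2R (A.mulVec y), hy, mul_one] at hcoord
  exact hcoord.trans (h i)

end Coherence

theorem gaussian_column_space_coherence_bound_general {n k : ℕ} [NeZero n] {Ω : Type*}
    [MeasurableSpace Ω] {μ : Measure Ω} [IsProbabilityMeasure μ]
    {A : Ω → Matrix (Fin n) (Fin k) ℝ}
    (hA : Measurable fun ω (p : Fin n × Fin k) ↦ A ω p.1 p.2)
    (hinv : IsLeftOrthogonallyInvariant (μ.map fun ω p ↦ A ω p.1 p.2)) {γ : ℝ} (hγ : 0 ≤ γ) :
    ENNReal.ofReal (1 - 2 * Real.exp (-γ ^ 2)) ≤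
      μ {ω | ∀ v : Fin n → ℝ, (∃ y, v = (A ω).mulVec y) → l2R v = 1 →
        linfR v ≤ 4 * (√((k : ℝ) / n) + √(Real.log n / n) + γ / √n)} := by
  set t : ℝ := 4 * (√((k : ℝ) / n) + √(Real.log n / n) + γ / √n)
  set S := {ω | ∀ v : Fin n → ℝ, (∃ y, v = (A ω).mulVec y) → l2R v = 1 → linfR v ≤ t}
  have hbad : μ {ω | ∃ i, t < ‖(columnSpace (A ω)).starProjection (EuclideanSpace.single i 1)‖} ≤
      ENNReal.ofReal (2 * Real.exp (-γ ^ 2)) := by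
    simpa [t] using (isIsotropic_columnSpace hA hinv).measure_exists_lt_norm_le (k := k)
      (fun ω ↦ by simpa using finrank_columnSpace_le (A ω))
      (u := fun i : Fin n ↦ EuclideanSpace.single i (1 : ℝ)) (by simp) hγ
  have hcompl : Sᶜ ⊆
      {ω | ∃ i, t < ‖(columnSpace (A ω)).starProjection (EuclideanSpace.single i 1)‖} := by
    refine Set.compl_subset_comm.1 fun ω hω v ⟨y, hy⟩ hv ↦ ?_
    subst hy
    exact linfR_mulVec_le (by positivity) (by simpa using hω) hv
  rw [ENNReal.ofReal_sub _ (by positivity), ENNReal.ofReal_one, tsub_le_iff_right]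
  calc (1 : ENNReal) = μ Set.univ := measure_univ.symm
    _ ≤ μ S + μ Sᶜ := measure_univ_le_add_compl S
    _ ≤ μ S + ENNReal.ofReal (2 * Real.exp (-γ ^ 2)) := by
        gcongr
        exact (measure_mono hcompl).trans hbad

/-- coherence of a uniformly random subspace.  There is an absolute
constant `C > 0` such that for an `n×k` matrix `A` with i.i.d. `N(0,1)` entries
(whose column space is a uniformly random `k`-dimensional subspace) and every
`γ ≥ 0`, with probability at least `1 − 2·exp(−γ²)`, every unit vector `v` in the
column space of `A` satisfies `‖v‖_∞ ≤ C·(√(k/n) + √(log(n)/n) + γ/√n)`. -/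
theorem gaussian_column_space_coherence_bound :
    ∃ C : ℝ, 0 < C ∧
      ∀ (n k : ℕ), 1 ≤ k → k ≤ n →
        ∀ (Ω : Type) [MeasurableSpace Ω] (μ : Measure Ω), IsProbabilityMeasure μ →
          ∀ (A : Ω → Matrix (Fin n) (Fin k) ℝ),
            Measurable (fun ω => fun p : Fin n × Fin k => A ω p.1 p.2) →
            Measure.map (fun ω => fun p : Fin n × Fin k => A ω p.1 p.2) μ =
              Measure.pi (fun _ : Fin n × Fin k => gaussianReal 0 1) →
            ∀ γ : ℝ, 0 ≤ γ →
              ENNReal.ofReal (1 - 2 * Real.exp (-γ ^ 2)) ≤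
                μ {ω | ∀ v : Fin n → ℝ, (∃ y, v = (A ω).mulVec y) → l2R v = 1 →
                  linfR v ≤ C * (Real.sqrt ((k : ℝ) / n) +
                    Real.sqrt (Real.log n / n) + γ / Real.sqrt n)} := by
  refine ⟨4, by norm_num, fun n k hk hkn Ω _ μ _ A hA hlaw γ hγ ↦ ?_⟩
  have : NeZero n := ⟨Nat.ne_of_gt (hk.trans hkn)⟩
  exact gaussian_column_space_coherence_bound_general hA
    (hlaw ▸ isLeftOrthogonallyInvariant_pi_gaussianReal) hγ
end
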